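/- Let ν : μ_{q+1} → ℂˣ be the unique group homomorphism of order exactly 2 (it exists and is unique since μ_{q+1} is cyclic of even order q+1). Then for each sign ε ∈ {+1, −1}, the ℂ-vector space W_ν^ε := {f : K × K → ℂ | f(λ⁻¹e₁, λ⁻¹e₂) = ν(λ)·f(e₁,e₂) for all λ ∈ μ_{q+1}, and f(e₁^q, e₂^q) = ε·f(e₁,e₂) for all (e₁,e₂) ∈ K × K} has dimension (q−1)(q²+1)/2 over ℂ. -/

import Mathlib

/-- The subspace `W_ν^ε` of functions on `K × K` transforming under the norm-one subgroup
`μ_{q+1} = rootsOfUnity (q+1) K` via the character `ν` (through inverses, as in the paper)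
and on which the coordinatewise Frobenius acts by the sign `ε`. -/
noncomputable def Wnu (q : ℕ) (K : Type) [Field K]
    (ν : rootsOfUnity (q + 1) K →* ℂˣ) (ε : ℂ) : Submodule ℂ (K × K → ℂ) where
  carrier := {f | (∀ (l : rootsOfUnity (q + 1) K) (e₁ e₂ : K),
      f ((((l : Kˣ)⁻¹ : Kˣ) : K) * e₁, (((l : Kˣ)⁻¹ : Kˣ) : K) * e₂) = (ν l : ℂ) * f (e₁, e₂)) ∧
    ∀ e₁ e₂ : K, f (e₁ ^ q, e₂ ^ q) = ε * f (e₁, e₂)}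
  add_mem' := by
    rintro f g ⟨hf1, hf2⟩ ⟨hg1, hg2⟩
    exact ⟨fun l e₁ e₂ => by
        rw [Pi.add_apply, Pi.add_apply, hf1 l e₁ e₂, hg1 l e₁ e₂]; ring,
      fun e₁ e₂ => by rw [Pi.add_apply, Pi.add_apply, hf2 e₁ e₂, hg2 e₁ e₂]; ring⟩
  zero_mem' := ⟨fun l e₁ e₂ => by simp, fun e₁ e₂ => by simp⟩
  smul_mem' := by
    rintro c f ⟨hf1, hf2⟩
    exact ⟨fun l e₁ e₂ => by
        rw [Pi.smul_apply, Pi.smul_apply, hf1 l e₁ e₂, smul_eq_mul, smul_eq_mul]; ring,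
      fun e₁ e₂ => by rw [Pi.smul_apply, Pi.smul_apply, hf2 e₁ e₂, smul_eq_mul, smul_eq_mul]; ring⟩

open Finset

/-- The trace of the pullback along a self-map of a finite type counts the fixed points. -/
theorem trace_funLeft_eq_card_fixed {α : Type*} [Fintype α] [DecidableEq α] (g : α → α) :
    LinearMap.trace ℂ (α → ℂ) (LinearMap.funLeft ℂ ℂ g) = #{x | g x = x} := by
  rw [LinearMap.trace_eq_matrix_trace ℂ (Pi.basisFun ℂ α), Matrix.trace]
  simp [LinearMap.funLeft_apply, Pi.single_apply]

section NormOne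

variable {q : ℕ} {K : Type} [Field K]

/-- Scalar multiplication of a pair by a norm-one element. -/
def scalePair (l : rootsOfUnity (q + 1) K) (e : K × K) : K × K :=
  (((l : Kˣ) : K) * e.1, ((l : Kˣ) : K) * e.2)

/-- The coordinatewise `q`-th power map. -/
def powPair (q : ℕ) (e : K × K) : K × K := (e.1 ^ q, e.2 ^ q)

theorem scalePair_scalePair (l m : rootsOfUnity (q + 1) K) (e : K × K) :
    scalePair l (scalePair m e) = scalePair (l * m) e := by
  simp [scalePair, mul_assoc]

theorem scalePair_one (e : K × K) : scalePair (1 : rootsOfUnity (q + 1) K) e = e := by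
  simp [scalePair]

theorem coe_pow_eq_inv (l : rootsOfUnity (q + 1) K) :
    ((l : Kˣ) : K) ^ q = (((l⁻¹ : rootsOfUnity (q + 1) K) : Kˣ) : K) := by
  have h : (l : Kˣ) ^ (q + 1) = 1 := l.2
  rw [pow_succ] at h
  simpa using congrArg (Units.val) (eq_inv_of_mul_eq_one_left h)

theorem powPair_scalePair (l : rootsOfUnity (q + 1) K) (e : K × K) :
    powPair q (scalePair l e) = scalePair l⁻¹ (powPair q e) := by
  simp only [powPair, scalePair, mul_pow, coe_pow_eq_inv]

theorem mem_Wnu_iff (ν : rootsOfUnity (q + 1) K →* ℂˣ) (ε : ℂ) (f : K × K → ℂ) :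
    f ∈ Wnu q K ν ε ↔ (∀ l e, f (scalePair l⁻¹ e) = ν l * f e) ∧
      ∀ e, f (powPair q e) = ε * f e :=
  ⟨fun h => ⟨fun l e => h.1 l e.1 e.2, fun e => h.2 e.1 e.2⟩,
    fun h => ⟨fun l e₁ e₂ => h.1 l (e₁, e₂), fun e₁ e₂ => h.2 (e₁, e₂)⟩⟩

/-- The averaging operator projecting onto `Wnu q K ν ε`. -/
noncomputable def averageWnu [Fintype (rootsOfUnity (q + 1) K)]
    (ν : rootsOfUnity (q + 1) K →* ℂˣ) (ε : ℂ) :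
    (K × K → ℂ) →ₗ[ℂ] (K × K → ℂ) :=
  (2 * (q + 1) : ℂ)⁻¹ • ∑ l, (ν l : ℂ) • (LinearMap.funLeft ℂ ℂ (scalePair l) +
    ε • LinearMap.funLeft ℂ ℂ fun e => scalePair l (powPair q e))

theorem averageWnu_apply [Fintype (rootsOfUnity (q + 1) K)]
    (ν : rootsOfUnity (q + 1) K →* ℂˣ) (ε : ℂ) (f : K × K → ℂ)
    (e : K × K) : averageWnu ν ε f e = (2 * (q + 1) : ℂ)⁻¹ *
      ∑ l, (ν l : ℂ) * (f (scalePair l e) + ε * f (scalePair l (powPair q e))) := by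
  simp [averageWnu, LinearMap.funLeft_apply, mul_add]

variable [Fintype K]

theorem powPair_powPair (hK : Fintype.card K = q ^ 2) (e : K × K) :
    powPair q (powPair q e) = e := by
  simp [powPair, ← pow_mul, ← sq, ← hK, FiniteField.pow_card]

theorem card_units_eq (hK : Fintype.card K = q ^ 2) : Nat.card Kˣ = (q - 1) * (q + 1) := by
  rw [Nat.card_units, Nat.card_eq_fintype_card, hK, mul_comm, ← Nat.sq_sub_sq, one_pow]

theorem card_normOne (hq : 1 < q) (hK : Fintype.card K = q ^ 2) :
    Nat.card (rootsOfUnity (q + 1) K) = q + 1 := by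
  obtain ⟨g, hg⟩ := IsCyclic.exists_ofOrder_eq_natCard (α := Kˣ)
  rw [card_units_eq hK] at hg
  have hprim : IsPrimitiveRoot (g ^ (q - 1)) (q + 1) :=
    (hg ▸ IsPrimitiveRoot.orderOf g).pow (by have := Nat.sub_pos_of_lt hq; positivity) rfl
  exact (IsPrimitiveRoot.coe_units_iff.mpr hprim).card_rootsOfUnity

/-- Hilbert 90 for the quadratic extension of finite fields. -/
theorem exists_pow_eq_mul (hq : 1 < q) (hK : Fintype.card K = q ^ 2)
    (l : rootsOfUnity (q + 1) K) : ∃ c : Kˣ, c ^ q = l * c := by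
  obtain ⟨g, hg⟩ := IsCyclic.exists_generator (α := Kˣ)
  obtain ⟨k, hk⟩ := (Submonoid.mem_powers_iff _ _).1 (mem_powers_iff_mem_zpowers.2 (hg l))
  have hl : (l : Kˣ) ^ (q + 1) = 1 := l.2
  rw [← hk, ← pow_mul, ← orderOf_dvd_iff_pow_eq_one, orderOf_eq_card_of_forall_mem_zpowers hg,
    card_units_eq hK] at hl
  obtain ⟨j, rfl⟩ := Nat.dvd_of_mul_dvd_mul_right (Nat.succ_pos q) hl
  refine ⟨g ^ j, ?_⟩
  rw [← hk, ← pow_mul, ← pow_add]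
  congr 1
  obtain ⟨r, rfl⟩ := Nat.exists_eq_add_of_lt hq
  rw [Nat.add_sub_cancel]
  ring

theorem card_fixed_scalePair [DecidableEq K] {l : rootsOfUnity (q + 1) K} (hl : l ≠ 1) :
    #{e : K × K | scalePair l e = e} = 1 := by
  have hl' : ((l : Kˣ) : K) ≠ 1 := by simpa using hl
  rw [card_eq_one]
  refine ⟨0, ?_⟩
  ext ⟨a, b⟩
  simp [scalePair, Prod.ext_iff, mul_left_eq_self₀, hl']

theorem card_fixed_scalePair_powPair [DecidableEq K] (hq : 1 < q) (hK : Fintype.card K = q ^ 2)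
    (l : rootsOfUnity (q + 1) K) :
    #{e : K × K | scalePair l (powPair q e) = e} = #{e : K × K | powPair q e = e} := by
  obtain ⟨c, hc⟩ := exists_pow_eq_mul hq hK l
  have hc' : (c : K) ^ q = (l : Kˣ) * c := by simpa using congrArg Units.val hc
  refine card_equiv ((Units.mulLeft c).prodCongr (Units.mulLeft c)) ?_
  rintro ⟨a, b⟩
  have key (x : K) : (c : K) ^ q * x ^ q = c * x ↔ ((l : Kˣ) : K) * x ^ q = x := by
    rw [hc', mul_comm _ (c : K), mul_assoc, mul_right_inj' c.ne_zero]
  simp only [mem_filter_univ]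
  simp [scalePair, powPair, mul_pow, key]

variable [Fintype (rootsOfUnity (q + 1) K)]

theorem isProj_averageWnu (hq : 1 < q) (hK : Fintype.card K = q ^ 2)
    {ν : rootsOfUnity (q + 1) K →* ℂˣ} (hν : ∀ x, ν x * ν x = 1) {ε : ℂ} (hε : ε * ε = 1) :
    LinearMap.IsProj (Wnu q K ν ε) (averageWnu ν ε) := by
  have hν' (x) : (ν x : ℂ) * ν x = 1 := by simpa using congrArg Units.val (hν x)
  have hinv (x) : ν x⁻¹ = ν x := by rw [map_inv, inv_eq_of_mul_eq_one_left (hν x)]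
  have shift (m : rootsOfUnity (q + 1) K) (F : K × K → ℂ) (e : K × K) :
      ∑ l, (ν l : ℂ) * F (scalePair l (scalePair m e)) =
        ν m * ∑ l, (ν l : ℂ) * F (scalePair l e) := by
    rw [mul_sum]
    refine Fintype.sum_equiv (Equiv.mulRight m) _ _ fun l => ?_
    rw [scalePair_scalePair, Equiv.coe_mulRight, map_mul, Units.val_mul]
    linear_combination (-(ν l : ℂ) * F (scalePair (l * m) e)) * hν' m
  refine ⟨fun f => (mem_Wnu_iff ..).2 ⟨fun l e => ?_, fun e => ?_⟩, fun f hf => ?_⟩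
  · simp only [averageWnu_apply, mul_add, sum_add_distrib, powPair_scalePair, inv_inv,
      mul_left_comm _ ε, ← mul_sum, shift, hinv]
    ring
  · simp only [averageWnu_apply, powPair_powPair hK, mul_add, sum_add_distrib,
      mul_left_comm _ ε, ← mul_sum]
    linear_combination (-(2 * (q + 1) : ℂ)⁻¹ * ∑ l, (ν l : ℂ) * f (scalePair l (powPair q e))) * hε
  · obtain ⟨h1, h2⟩ := (mem_Wnu_iff ..).1 hf
    have h1' (l e) : f (scalePair l e) = ν l * f e := by simpa [hinv] using h1 l⁻¹ e
    have hq0 : (q + 1 : ℂ) ≠ 0 := by exact_mod_cast q.succ_ne_zero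
    ext e
    have hterm (l) : (ν l : ℂ) * (f (scalePair l e) + ε * f (scalePair l (powPair q e))) =
        2 * f e := by
      rw [h1', h1', h2]
      linear_combination (f e + ε * ε * f e) * hν' l + f e * hε
    simp only [averageWnu_apply, hterm, sum_const, card_univ, ← Nat.card_eq_fintype_card,
      card_normOne hq hK, nsmul_eq_mul]
    push_cast
    field_simp

theorem trace_averageWnu (hq : 1 < q) (hK : Fintype.card K = q ^ 2)
    {ν : rootsOfUnity (q + 1) K →* ℂˣ} (hν : ν ≠ 1) (ε : ℂ) :
    LinearMap.trace ℂ _ (averageWnu ν ε) = (2 * (q + 1) : ℂ)⁻¹ * (q ^ 4 - 1) := by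
  classical
  have hsum : ∑ l, (ν l : ℂ) = 0 :=
    sum_hom_units_eq_zero ((Units.coeHom ℂ).comp ν) fun h =>
      hν (MonoidHom.ext fun x => Units.ext (DFunLike.congr_fun h x))
  have hcard (l : rootsOfUnity (q + 1) K) : (#{e : K × K | scalePair l e = e} : ℂ) =
      1 + if l = 1 then (q ^ 4 - 1 : ℂ) else 0 := by
    split_ifs with h
    · subst h
      simp only [scalePair_one, filter_true, card_univ, Fintype.card_prod, hK]
      push_cast
      ring
    · simp [card_fixed_scalePair h]
  simp only [averageWnu, map_smul, map_sum, map_add, trace_funLeft_eq_card_fixed,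
    card_fixed_scalePair_powPair hq hK, hcard, smul_eq_mul, mul_add, sum_add_distrib,
    ← sum_mul, hsum]
  simp

end NormOne

/-- Let `ν` be the unique character of `μ_{q+1}` of order exactly 2 (i.e. `ν ≠ 1` and
`ν² = 1`).  For each sign `ε ∈ {1, -1}`, the space `W_ν^ε` has dimension `(q-1)(q²+1)/2`,
where `K` is a field with `q²` elements and `q` is an odd prime power. -/
theorem dim_Wnu (q : ℕ) (hq : ∃ p n : ℕ, p.Prime ∧ Odd p ∧ 0 < n ∧ q = p ^ n)
    (K : Type) [Field K] [Fintype K] (hK : Fintype.card K = q ^ 2)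
    (ν : rootsOfUnity (q + 1) K →* ℂˣ) (hν1 : ν ≠ 1)
    (hν2 : ∀ x : rootsOfUnity (q + 1) K, ν x * ν x = 1)
    (ε : ℂ) (hε : ε = 1 ∨ ε = -1) :
    Module.finrank ℂ (Wnu q K ν ε) = (q - 1) * (q ^ 2 + 1) / 2 := by
  classical
  have := Fintype.ofFinite (rootsOfUnity (q + 1) K)
  obtain ⟨p, n, hp, -, hn, hpn⟩ := hq
  have hq : 1 < q := hpn ▸ Nat.one_lt_pow hn.ne' hp.one_lt
  have hε2 : ε * ε = 1 := by rcases hε with rfl | rfl <;> norm_num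
  have htr := (isProj_averageWnu hq hK hν2 hε2).trace.symm.trans (trace_averageWnu hq hK hν1 ε)
  have hq0 : (q + 1 : ℂ) ≠ 0 := by exact_mod_cast q.succ_ne_zero
  have hdim : ((Module.finrank ℂ (Wnu q K ν ε) * 2 : ℕ) : ℂ) =
      ((q - 1) * (q ^ 2 + 1) : ℕ) := by
    push_cast [htr, Nat.cast_sub hq.le]
    field_simp
    ring
  rw [← Nat.cast_injective hdim, Nat.mul_div_cancel _ two_pos]
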